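/- For every real r ≥ 0, ∑_{α=0}^∞ r^{2α}/α!! ≤ (1+r²) e^{r⁴/2}. -/

import Mathlib

open Nat

/-!
Since `(2k)‼ = 2 ^ k * k!`, the even terms of `∑ x ^ n / n‼` form the exponential series of
`x ^ 2 / 2`. Since `(2k)‼ ≤ (2k + 1)‼`, each odd term is at most `|x|` times the even term
before it.
-/

lemma doubleFactorial_le_succ : ∀ n : ℕ, n‼ ≤ (n + 1)‼
  | 0 => le_rfl
  | 1 => one_le_two
  | n + 2 => Nat.mul_le_mul (n + 2).le_succ (doubleFactorial_le_succ n)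

lemma pow_two_mul_div_doubleFactorial {K : Type*} [Semifield K] (x : K) (k : ℕ) :
    x ^ (2 * k) / ((2 * k)‼ : K) = (x ^ 2 / 2) ^ k / (k ! : K) := by
  rw [doubleFactorial_two_mul, div_pow, div_div, ← pow_mul, cast_mul, cast_pow, cast_ofNat]

lemma hasSum_pow_two_mul_div_doubleFactorial (x : ℝ) :
    HasSum (fun k : ℕ ↦ x ^ (2 * k) / ((2 * k)‼ : ℝ)) (Real.exp (x ^ 2 / 2)) := by
  simp only [pow_two_mul_div_doubleFactorial, Real.exp_eq_exp_ℝ]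
  exact NormedSpace.expSeries_div_hasSum_exp (x ^ 2 / 2)

lemma abs_pow_two_mul_add_one_div_doubleFactorial_le {K : Type*} [Field K] [LinearOrder K]
    [IsStrictOrderedRing K] (x : K) (k : ℕ) :
    |x ^ (2 * k + 1) / ((2 * k + 1)‼ : K)| ≤ |x| * (x ^ (2 * k) / ((2 * k)‼ : K)) :=
  calc |x ^ (2 * k + 1) / ((2 * k + 1)‼ : K)|
      = |x| * (x ^ (2 * k) / (2 * k + 1)‼) := by
        rw [abs_div, abs_pow, Nat.abs_cast, _root_.pow_succ', (even_two_mul k).pow_abs,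
          mul_div_assoc]
    _ ≤ |x| * (x ^ (2 * k) / (2 * k)‼) := by
        have := (even_two_mul k).pow_nonneg x
        gcongr
        exact doubleFactorial_le_succ (2 * k)

theorem tsum_sq_div_doubleFactorial_le_general (x : ℝ) :
    (∑' n : ℕ, x ^ n / (n‼ : ℝ)) ≤ (1 + |x|) * Real.exp (x ^ 2 / 2) := by
  have heven := hasSum_pow_two_mul_div_doubleFactorial x
  have hmajorant := heven.mul_left |x|
  have hodd_le (k : ℕ) : ‖x ^ (2 * k + 1) / ((2 * k + 1)‼ : ℝ)‖
      ≤ |x| * (x ^ (2 * k) / ((2 * k)‼ : ℝ)) :=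
    abs_pow_two_mul_add_one_div_doubleFactorial_le x k
  have hodd : Summable fun k : ℕ ↦ x ^ (2 * k + 1) / ((2 * k + 1)‼ : ℝ) :=
    .of_norm_bounded hmajorant.summable hodd_le
  calc ∑' n : ℕ, x ^ n / (n‼ : ℝ)
      = Real.exp (x ^ 2 / 2) + ∑' k : ℕ, x ^ (2 * k + 1) / ((2 * k + 1)‼ : ℝ) :=
        (heven.even_add_odd (f := fun n ↦ x ^ n / (n‼ : ℝ)) hodd.hasSum).tsum_eq
    _ ≤ Real.exp (x ^ 2 / 2) + |x| * Real.exp (x ^ 2 / 2) := by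
        gcongr
        exact (le_abs_self _).trans (tsum_of_norm_bounded hmajorant hodd_le)
    _ = (1 + |x|) * Real.exp (x ^ 2 / 2) := by ring

/-- For every real `r ≥ 0`, `∑_{α=0}^∞ r^(2α)/α!! ≤ (1+r²) e^(r⁴/2)`. -/
theorem tsum_sq_div_doubleFactorial_le (r : ℝ) (hr : 0 ≤ r) :
    (∑' α : ℕ, r ^ (2 * α) / (α‼ : ℝ)) ≤ (1 + r ^ 2) * Real.exp (r ^ 4 / 2) := by
  have h := tsum_sq_div_doubleFactorial_le_general (r ^ 2)
  simpa only [← pow_mul, abs_sq] using h
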